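/- Let k ≥ 1, 0 < s < 1, and ε₁, …, ε_k > 0. Then ∫_{S^{k−1}} (∑_{j=1}^k εⱼ² xⱼ²)^{−(k+2s)/2} dσ(x) = (π^{k/2}/(Γ(1−s)·Γ((k+2s)/2)))·∑_{i=1}^k ε_i^{−2s}·∫_0^∞ t^{(k+2s)/2 − 1}/((1+t)·∏_{j=1}^k (ε_i² + εⱼ² t)^{1/2}) dt, where all the integrals on the right are finite. -/

import Mathlib

open MeasureTheory

/-!
Write `Q x = ∑ j, a j * x j ^ 2` on `ℝᵈ` and evaluate `J = ∫ ‖x‖ ^ (2 * s) * exp (-Q x) dx` twice.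
In polar coordinates the radial integral is a Gamma integral, so `J` is `Γ((d + 2s)/2) / 2` times
the integral of `Q ^ (-(d + 2s)/2)` over the sphere. On the other hand,
`Γ(1 - s) * ‖x‖ ^ (2 * s) = ‖x‖ ^ 2 * ∫ u in (0, ∞), u ^ (-s) * exp (-u * ‖x‖ ^ 2)`; expanding
`‖x‖ ^ 2 = ∑ i, x i ^ 2` and exchanging the integrals leaves second moments of Gaussians with
weights `a j + u`, and the substitution `u = a i / t` in the `i`-th summand gives the right-hand
side. All integrands are nonnegative, so the computation takes place in `[0, ∞]`, and the
integrals on the right are finite because the one over the sphere is.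
-/

open Real Set Module Metric
open scoped ENNReal

section OneVariable

lemma lintegral_rpow_mul_exp_neg_mul_rpow {p q b : ℝ} (hp : 0 < p) (hq : -1 < q) (hb : 0 < b) :
    ∫⁻ x in Ioi (0 : ℝ), .ofReal (x ^ q * exp (-b * x ^ p)) =
      .ofReal (b ^ (-(q + 1) / p) * (1 / p) * Gamma ((q + 1) / p)) := by
  rw [← integral_rpow_mul_exp_neg_mul_rpow hp hq hb,
    ofReal_integral_eq_lintegral_ofReal (integrableOn_rpow_mul_exp_neg_mul_rpow hq hp hb)]
  filter_upwards [ae_restrict_mem measurableSet_Ioi] with x (hx : 0 < x)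
  exact mul_nonneg (rpow_nonneg hx.le _) (exp_nonneg _)

lemma integral_sq_mul_exp_neg_mul_sq {b : ℝ} (hb : 0 < b) :
    ∫ x : ℝ, x ^ 2 * exp (-b * x ^ 2) = (2 * b)⁻¹ * √(π / b) := by
  have half_line := integral_rpow_mul_exp_neg_mul_rpow (p := 2) (q := 2) two_pos (by norm_num) hb
  have Gamma_three_halves : Gamma ((2 + 1) / 2) = √π / 2 := by
    rw [show ((2 : ℝ) + 1) / 2 = 1 / 2 + 1 by norm_num, Gamma_add_one (by norm_num),
      Gamma_one_half_eq]
    ring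
  have rpow_three_halves : b ^ (-(2 + 1) / 2 : ℝ) = b⁻¹ * (√b)⁻¹ := by
    rw [show (-(2 + 1) / 2 : ℝ) = -1 + -(1 / 2) by norm_num, rpow_add hb, rpow_neg_one,
      rpow_neg hb.le, sqrt_eq_rpow]
  simp only [rpow_two] at half_line
  have even_integrand := integral_comp_abs (f := fun x ↦ x ^ 2 * exp (-b * x ^ 2))
  simp only [sq_abs] at even_integrand
  rw [even_integrand, half_line, Gamma_three_halves, rpow_three_halves, sqrt_div pi_pos.le]
  ring

lemma lintegral_Ioi_eq_lintegral_comp_div {c : ℝ} (hc : 0 < c) (f : ℝ → ℝ≥0∞) :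
    ∫⁻ u in Ioi (0 : ℝ), f u = ∫⁻ t in Ioi (0 : ℝ), .ofReal (c / t ^ 2) * f (c / t) := by
  have maps : MapsTo (c / ·) (Ioi 0) (Ioi 0) := fun t ht ↦ div_pos hc ht
  have self_inverse : LeftInvOn (c / ·) (c / ·) (Ioi 0) := fun t _ ↦ div_div_cancel₀ hc.ne'
  have bij : BijOn (c / ·) (Ioi 0) (Ioi 0) := InvOn.bijOn ⟨self_inverse, self_inverse⟩ maps maps
  have hasDeriv (t : ℝ) (ht : t ∈ Ioi 0) :
      HasDerivWithinAt (c / ·) (-(c / t ^ 2)) (Ioi 0) t := by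
    simpa [div_eq_mul_inv] using
      ((hasDerivAt_inv (ne_of_gt ht)).const_mul c).hasDerivWithinAt (s := Ioi 0)
  conv_lhs => rw [← bij.image_eq]
  rw [lintegral_image_eq_lintegral_abs_deriv_mul measurableSet_Ioi hasDeriv bij.injOn]
  simp only [abs_neg, abs_of_nonneg (div_nonneg hc.le (sq_nonneg _))]

end OneVariable

section Polar

variable {E : Type*} [NormedAddCommGroup E] [NormedSpace ℝ E] [FiniteDimensional ℝ E]
  [Nontrivial E] [MeasurableSpace E] [BorelSpace E] (μ : Measure E) [μ.IsAddHaarMeasure]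

lemma lintegral_eq_lintegral_toSphere {f : E → ℝ≥0∞} (hf : Measurable f) :
    ∫⁻ x, f x ∂μ = ∫⁻ x : sphere (0 : E) 1, (∫⁻ r in Ioi (0 : ℝ),
      .ofReal (r ^ (finrank ℝ E - 1)) * f (r • (x : E))) ∂μ.toSphere := by
  have polar := μ.measurePreserving_homeomorphUnitSphereProd.symm
    (homeomorphUnitSphereProd E).toMeasurableEquiv
  have hf_polar : Measurable fun y ↦
      f ((homeomorphUnitSphereProd E).toMeasurableEquiv.symm y : ({0}ᶜ : Set E)) :=
    hf.comp (measurable_subtype_coe.comp (MeasurableEquiv.measurable _))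
  conv_lhs => rw [← restrict_compl_singleton (μ := μ) 0,
    ← lintegral_subtype_comap (measurableSet_singleton _).compl]
  rw [← polar.lintegral_comp_emb (MeasurableEquiv.measurableEmbedding _),
    lintegral_prod _ hf_polar.aemeasurable]
  refine lintegral_congr fun x ↦ ?_
  have hf_ray : Measurable fun r ↦
      f ((homeomorphUnitSphereProd E).toMeasurableEquiv.symm (x, r) : ({0}ᶜ : Set E)) :=
    hf_polar.comp measurable_prodMk_left
  rw [Measure.volumeIoiPow, lintegral_withDensity_eq_lintegral_mul _ (by fun_prop) hf_ray,
    ← lintegral_subtype_comap measurableSet_Ioi]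
  rfl

lemma lintegral_norm_rpow_mul_exp_neg_of_homogeneous {Q : E → ℝ} (hQ : Measurable Q)
    (hQ_pos : ∀ x ≠ 0, 0 < Q x) {p q : ℝ} (hp : 0 < p) (hq : -(finrank ℝ E : ℝ) < q)
    (hQ_smul : ∀ r > 0, ∀ x, Q (r • x) = r ^ p * Q x) :
    ∫⁻ x, .ofReal (‖x‖ ^ q * exp (-Q x)) ∂μ =
      .ofReal (Gamma ((finrank ℝ E + q) / p) / p) *
        ∫⁻ x : sphere (0 : E) 1, .ofReal (Q x ^ (-((finrank ℝ E + q) / p))) ∂μ.toSphere := by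
  have hΓ : 0 ≤ Gamma ((finrank ℝ E + q) / p) / p :=
    div_nonneg (Gamma_nonneg_of_nonneg (div_nonneg (by linarith) hp.le)) hp.le
  have cast_finrank_sub_one : ((finrank ℝ E - 1 : ℕ) : ℝ) = finrank ℝ E - 1 :=
    Nat.cast_pred finrank_pos
  rw [lintegral_eq_lintegral_toSphere μ (by fun_prop), ← lintegral_const_mul _ (by fun_prop)]
  refine lintegral_congr fun x ↦ ?_
  have radial_integrand : ∀ r ∈ Ioi (0 : ℝ),
      ENNReal.ofReal (r ^ (finrank ℝ E - 1)) *
          .ofReal (‖r • (x : E)‖ ^ q * exp (-Q (r • (x : E)))) =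
        .ofReal (r ^ (finrank ℝ E - 1 + q) * exp (-Q x * r ^ p)) := by
    intro r (hr : 0 < r)
    rw [← ENNReal.ofReal_mul (by positivity), hQ_smul r hr, norm_smul, norm_eq_of_mem_sphere,
      mul_one, norm_of_nonneg hr.le, rpow_add hr, ← cast_finrank_sub_one, rpow_natCast]
    ring_nf
  rw [setLIntegral_congr_fun measurableSet_Ioi radial_integrand,
    lintegral_rpow_mul_exp_neg_mul_rpow hp (by linarith)
      (hQ_pos x (ne_zero_of_mem_unit_sphere x)), ← ENNReal.ofReal_mul hΓ]
  ring_nf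

end Polar

section EuclideanSpace

variable {ι : Type*} [Fintype ι]

/-- The diagonal quadratic form `∑ j, a j * x j ^ 2` on Euclidean space. -/
noncomputable def diagForm (a : ι → ℝ) (x : EuclideanSpace ℝ ι) : ℝ :=
  ∑ j, a j * x j ^ 2

/-- The integrand on `(0, ∞)` attached to the coordinate `i` in the formula for the integral of
`diagForm a x ^ (-(d + 2 * s) / 2)` over the unit sphere, where `d` is the dimension. -/
noncomputable def coordIntegrand (a : ι → ℝ) (s : ℝ) (i : ι) (t : ℝ) : ℝ :=
  t ^ ((Fintype.card ι + 2 * s) / 2 - 1) / ((1 + t) * ∏ j, √(a i + a j * t))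

section DiagForm

variable (a : ι → ℝ)

@[fun_prop]
lemma continuous_diagForm : Continuous (diagForm a) := by
  unfold diagForm
  fun_prop

variable {a}

lemma diagForm_pos (ha : ∀ j, 0 < a j) {x : EuclideanSpace ℝ ι} (hx : x ≠ 0) :
    0 < diagForm a x := by
  obtain ⟨j, hj⟩ : ∃ j, x j ≠ 0 := by
    by_contra! h
    exact hx (PiLp.ext h)
  exact Finset.sum_pos' (fun i _ ↦ mul_nonneg (ha i).le (sq_nonneg _))
    ⟨j, Finset.mem_univ j, mul_pos (ha j) (by positivity)⟩

lemma diagForm_smul (r : ℝ) (x : EuclideanSpace ℝ ι) :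
    diagForm a (r • x) = r ^ 2 * diagForm a x := by
  simp only [diagForm, PiLp.smul_apply, smul_eq_mul, mul_pow, Finset.mul_sum, mul_left_comm]

lemma diagForm_add_const (u : ℝ) (x : EuclideanSpace ℝ ι) :
    diagForm (fun j ↦ a j + u) x = diagForm a x + u * ‖x‖ ^ 2 := by
  simp only [diagForm, EuclideanSpace.real_norm_sq_eq, add_mul, Finset.sum_add_distrib,
    Finset.mul_sum]

lemma integrable_diagForm_rpow_toSphere (ha : ∀ j, 0 < a j) (p : ℝ) :
    Integrable (fun x : sphere (0 : EuclideanSpace ℝ ι) 1 ↦ diagForm a x ^ p)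
      (volume : Measure (EuclideanSpace ℝ ι)).toSphere := by
  have hcont : Continuous fun x : sphere (0 : EuclideanSpace ℝ ι) 1 ↦ diagForm a x ^ p :=
    .rpow_const (by fun_prop) fun x ↦ .inl (diagForm_pos ha (ne_zero_of_mem_unit_sphere x)).ne'
  exact hcont.integrable_of_hasCompactSupport (.of_compactSpace _)

end DiagForm

section Gaussian

variable {a : ι → ℝ}

lemma lintegral_coord_sq_mul_exp_neg_diagForm (ha : ∀ j, 0 < a j) (i : ι) :
    ∫⁻ x : EuclideanSpace ℝ ι, .ofReal (x i ^ 2 * exp (-diagForm a x)) =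
      .ofReal ((2 * a i)⁻¹ * ∏ j, √(π / a j)) := by
  classical
  let f (j : ι) (y : ℝ) : ℝ := (if j = i then y ^ 2 else 1) * exp (-a j * y ^ 2)
  have integrand_eq_prod (x : ι → ℝ) :
      x i ^ 2 * exp (-diagForm a (WithLp.toLp 2 x)) = ∏ j, f j (x j) := by
    simp only [f, Finset.prod_mul_distrib, ← exp_sum, neg_mul, Finset.sum_neg_distrib,
      Finset.prod_ite_eq', Finset.mem_univ, if_true, diagForm]
  have integrable_f (j : ι) : Integrable (f j) := by
    by_cases hj : j = i
    · simpa [f, hj] using integrable_rpow_mul_exp_neg_mul_sq (ha i) (s := 2) (by norm_num)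
    · simpa [f, hj] using integrable_exp_neg_mul_sq (ha j)
  have integral_f (j : ι) :
      ∫ y, f j y = (if j = i then (2 * a i)⁻¹ else 1) * √(π / a j) := by
    by_cases hj : j = i
    · simpa only [f, hj, if_true] using integral_sq_mul_exp_neg_mul_sq (ha i)
    · simpa only [f, hj, if_false, one_mul] using integral_gaussian (a j)
  rw [← (PiLp.volume_preserving_toLp ι).lintegral_comp_emb
    (MeasurableEquiv.toLp 2 (ι → ℝ)).measurableEmbedding]
  simp only [integrand_eq_prod]
  have nonneg (x : ι → ℝ) : 0 ≤ ∏ j, f j (x j) := by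
    rw [← integrand_eq_prod]
    positivity
  rw [volume_pi, ← ofReal_integral_eq_lintegral_ofReal (.fintype_prod integrable_f)
    (.of_forall nonneg), integral_fintype_prod_eq_prod]
  simp only [integral_f, Finset.prod_mul_distrib, Finset.prod_ite_eq', Finset.mem_univ, if_true]

lemma lintegral_rpow_neg_mul_sum_coord_sq_mul_exp {s : ℝ} (hs : s < 1)
    {x : EuclideanSpace ℝ ι} (hx : x ≠ 0) :
    ∫⁻ u in Ioi (0 : ℝ), ∑ i, .ofReal (u ^ (-s)) *
        .ofReal (x i ^ 2 * exp (-diagForm (fun j ↦ a j + u) x)) =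
      .ofReal (Gamma (1 - s)) * .ofReal (‖x‖ ^ (2 * s) * exp (-diagForm a x)) := by
  have hx : 0 < ‖x‖ := norm_pos_iff.2 hx
  have integrand_eq : ∀ u ∈ Ioi (0 : ℝ),
      ∑ i, ENNReal.ofReal (u ^ (-s)) *
          .ofReal (x i ^ 2 * exp (-diagForm (fun j ↦ a j + u) x)) =
        .ofReal (‖x‖ ^ 2 * exp (-diagForm a x)) *
          .ofReal (u ^ (-s) * exp (-‖x‖ ^ 2 * u ^ (1 : ℝ))) := by
    intro u (hu : 0 < u)
    rw [← Finset.mul_sum, ← ENNReal.ofReal_sum_of_nonneg (fun _ _ ↦ by positivity),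
      ← Finset.sum_mul, ← EuclideanSpace.real_norm_sq_eq, ← ENNReal.ofReal_mul (by positivity),
      ← ENNReal.ofReal_mul (by positivity), diagForm_add_const, neg_add, exp_add, rpow_one]
    ring_nf
  have norm_rpow : ‖x‖ ^ 2 * (‖x‖ ^ 2) ^ (s - 1) = ‖x‖ ^ (2 * s) := by
    rw [rpow_sub_one (by positivity), mul_div_cancel₀ _ (by positivity), rpow_mul hx.le, rpow_two]
  have hΓ : 0 ≤ Gamma (1 - s) := Gamma_nonneg_of_nonneg (by linarith)
  rw [setLIntegral_congr_fun measurableSet_Ioi integrand_eq, lintegral_const_mul _ (by fun_prop),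
    lintegral_rpow_mul_exp_neg_mul_rpow one_pos (by linarith) (by positivity),
    ← ENNReal.ofReal_mul (by positivity), ← ENNReal.ofReal_mul hΓ, ← norm_rpow]
  ring_nf

lemma Gamma_mul_lintegral_norm_rpow_mul_exp_neg_diagForm [Nonempty ι] {s : ℝ} (hs : s < 1)
    (ha : ∀ j, 0 < a j) :
    .ofReal (Gamma (1 - s)) *
        ∫⁻ x : EuclideanSpace ℝ ι, .ofReal (‖x‖ ^ (2 * s) * exp (-diagForm a x)) =
      ∑ i, ∫⁻ u in Ioi (0 : ℝ),
        .ofReal (u ^ (-s) * ((2 * (a i + u))⁻¹ * ∏ j, √(π / (a j + u)))) := by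
  have measurable_integrand (i : ι) : Measurable fun z : EuclideanSpace ℝ ι × ℝ ↦
      ENNReal.ofReal (z.2 ^ (-s)) *
        .ofReal (z.1 i ^ 2 * exp (-diagForm (fun j ↦ a j + z.2) z.1)) := by
    unfold diagForm
    fun_prop
  calc
    _ = ∫⁻ x : EuclideanSpace ℝ ι, ∫⁻ u in Ioi (0 : ℝ), ∑ i, .ofReal (u ^ (-s)) *
          .ofReal (x i ^ 2 * exp (-diagForm (fun j ↦ a j + u) x)) := by
      rw [← lintegral_const_mul _ (by fun_prop)]
      refine lintegral_congr_ae ?_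
      filter_upwards [Measure.ae_ne volume 0] with x hx
      exact (lintegral_rpow_neg_mul_sum_coord_sq_mul_exp hs hx).symm
    _ = ∫⁻ u in Ioi (0 : ℝ), ∑ i, ∫⁻ x : EuclideanSpace ℝ ι, .ofReal (u ^ (-s)) *
          .ofReal (x i ^ 2 * exp (-diagForm (fun j ↦ a j + u) x)) := by
      rw [lintegral_lintegral_swap
        (Finset.measurable_fun_sum _ fun i _ ↦ measurable_integrand i).aemeasurable]
      exact lintegral_congr fun u ↦ lintegral_finsetSum _ fun i _ ↦ by fun_prop
    _ = ∫⁻ u in Ioi (0 : ℝ), ∑ i,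
          .ofReal (u ^ (-s) * ((2 * (a i + u))⁻¹ * ∏ j, √(π / (a j + u)))) := by
      refine setLIntegral_congr_fun measurableSet_Ioi fun u (hu : 0 < u) ↦
        Finset.sum_congr rfl fun i _ ↦ ?_
      rw [lintegral_const_mul _ (by fun_prop),
        lintegral_coord_sq_mul_exp_neg_diagForm (fun j ↦ add_pos (ha j) hu),
        ENNReal.ofReal_mul (rpow_nonneg hu.le _)]
    _ = _ := lintegral_finsetSum _ fun i _ ↦ by fun_prop

end Gaussian

section CoordIntegrand

variable {a : ι → ℝ}

lemma coordIntegrand_nonneg_ae (a : ι → ℝ) (s : ℝ) (i : ι) :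
    0 ≤ᵐ[volume.restrict (Ioi 0)] coordIntegrand a s i := by
  filter_upwards [ae_restrict_mem measurableSet_Ioi] with t (ht : 0 < t)
  simp only [Pi.zero_apply, coordIntegrand]
  positivity

@[fun_prop]
lemma measurable_coordIntegrand (a : ι → ℝ) (s : ℝ) (i : ι) :
    Measurable (coordIntegrand a s i) := by
  unfold coordIntegrand
  fun_prop

lemma prod_sqrt_pi_div_add_div (ha : ∀ j, 0 < a j) (i : ι) {t : ℝ} (ht : 0 < t) :
    ∏ j, √(π / (a j + a i / t)) =
      π ^ ((Fintype.card ι : ℝ) / 2) * t ^ ((Fintype.card ι : ℝ) / 2) /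
        ∏ j, √(a i + a j * t) := by
  have factor (j : ι) : √(π / (a j + a i / t)) = √(π * t) / √(a i + a j * t) := by
    rw [← sqrt_div (by positivity)]
    congr 1
    have := ha i
    have := ha j
    field_simp
    ring
  have sqrt_pow : √(π * t) ^ Fintype.card ι = (π * t) ^ ((Fintype.card ι : ℝ) / 2) := by
    rw [← rpow_natCast, sqrt_eq_rpow, ← rpow_mul (by positivity), one_div_mul_eq_div]
  simp only [factor, Finset.prod_div_distrib, Finset.prod_const, Finset.card_univ, sqrt_pow,
    mul_rpow pi_pos.le ht.le]

lemma comp_div_eq_mul_coordIntegrand (ha : ∀ j, 0 < a j) (s : ℝ) (i : ι) {t : ℝ} (ht : 0 < t) :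
    a i / t ^ 2 *
        ((a i / t) ^ (-s) * ((2 * (a i + a i / t))⁻¹ * ∏ j, √(π / (a j + a i / t)))) =
      π ^ ((Fintype.card ι : ℝ) / 2) / 2 * a i ^ (-s) * coordIntegrand a s i t := by
  have hi := ha i
  have div_rpow_neg : (a i / t) ^ (-s) = a i ^ (-s) * t ^ s := by
    rw [div_rpow hi.le ht.le, rpow_neg ht.le, div_inv_eq_mul]
  have rpow_exponent : t ^ ((Fintype.card ι + 2 * s) / 2 - 1) =
      t ^ ((Fintype.card ι : ℝ) / 2) * t ^ s / t := by
    rw [← rpow_add ht, ← rpow_sub_one ht.ne']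
    ring_nf
  rw [coordIntegrand, prod_sqrt_pi_div_add_div ha i ht, div_rpow_neg, rpow_exponent]
  field_simp
  ring

lemma lintegral_rpow_neg_mul_prod_sqrt (ha : ∀ j, 0 < a j) (s : ℝ) (i : ι) :
    ∫⁻ u in Ioi (0 : ℝ), .ofReal (u ^ (-s) * ((2 * (a i + u))⁻¹ * ∏ j, √(π / (a j + u)))) =
      .ofReal (π ^ ((Fintype.card ι : ℝ) / 2) / 2 * a i ^ (-s)) *
        ∫⁻ t in Ioi (0 : ℝ), .ofReal (coordIntegrand a s i t) := by
  have hi := ha i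
  rw [lintegral_Ioi_eq_lintegral_comp_div hi, ← lintegral_const_mul _ (by fun_prop)]
  refine setLIntegral_congr_fun measurableSet_Ioi fun t (ht : 0 < t) ↦ ?_
  rw [← ENNReal.ofReal_mul (by positivity), ← ENNReal.ofReal_mul (by positivity),
    comp_div_eq_mul_coordIntegrand ha s i ht]

end CoordIntegrand

section Sphere

variable [Nonempty ι] {a : ι → ℝ} {s : ℝ}

lemma Gamma_mul_lintegral_toSphere_diagForm_rpow (hs_gt : -(Fintype.card ι : ℝ) < 2 * s)
    (hs_lt : s < 1) (ha : ∀ j, 0 < a j) :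
    .ofReal (Gamma (1 - s)) * (.ofReal (Gamma ((Fintype.card ι + 2 * s) / 2) / 2) *
        ∫⁻ x : sphere (0 : EuclideanSpace ℝ ι) 1,
          .ofReal (diagForm a x ^ (-((Fintype.card ι + 2 * s) / 2)))
          ∂(volume : Measure (EuclideanSpace ℝ ι)).toSphere) =
      ∑ i, .ofReal (π ^ ((Fintype.card ι : ℝ) / 2) / 2 * a i ^ (-s)) *
        ∫⁻ t in Ioi (0 : ℝ), .ofReal (coordIntegrand a s i t) := by
  have polar := lintegral_norm_rpow_mul_exp_neg_of_homogeneous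
    (volume : Measure (EuclideanSpace ℝ ι)) (continuous_diagForm a).measurable
    (fun x ↦ diagForm_pos ha) two_pos (q := 2 * s) (by simpa using hs_gt)
    (fun r _ x ↦ by rw [diagForm_smul, rpow_two])
  rw [finrank_euclideanSpace] at polar
  rw [← polar, Gamma_mul_lintegral_norm_rpow_mul_exp_neg_diagForm hs_lt ha]
  exact Finset.sum_congr rfl fun i _ ↦ lintegral_rpow_neg_mul_prod_sqrt ha s i

lemma integrableOn_coordIntegrand (hs_gt : -(Fintype.card ι : ℝ) < 2 * s) (hs_lt : s < 1)
    (ha : ∀ j, 0 < a j) (i : ι) :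
    IntegrableOn (coordIntegrand a s i) (Ioi 0) := by
  have sphere_ne_top :=
    (integrable_diagForm_rpow_toSphere ha (-((Fintype.card ι + 2 * s) / 2))).lintegral_lt_top.ne
  have sum_ne_top := Gamma_mul_lintegral_toSphere_diagForm_rpow hs_gt hs_lt ha ▸
    ENNReal.mul_ne_top ENNReal.ofReal_ne_top
      (ENNReal.mul_ne_top ENNReal.ofReal_ne_top sphere_ne_top)
  have coeff_pos : 0 < π ^ ((Fintype.card ι : ℝ) / 2) / 2 * a i ^ (-s) := by
    have := ha i
    positivity
  refine (lintegral_ofReal_ne_top_iff_integrable (by fun_prop)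
    (coordIntegrand_nonneg_ae a s i)).1 fun eq_top ↦ ?_
  refine ENNReal.sum_ne_top.1 sum_ne_top i (Finset.mem_univ i) ?_
  rw [eq_top, ENNReal.mul_top (ENNReal.ofReal_pos.2 coeff_pos).ne']

theorem stmt14_general (hs_gt : -(Fintype.card ι : ℝ) < 2 * s) (hs_lt : s < 1)
    (ha : ∀ j, 0 < a j) :
    (∀ i, IntegrableOn (coordIntegrand a s i) (Ioi 0)) ∧
    ∫ x : sphere (0 : EuclideanSpace ℝ ι) 1, diagForm a x ^ (-((Fintype.card ι + 2 * s) / 2))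
        ∂(volume : Measure (EuclideanSpace ℝ ι)).toSphere =
      π ^ ((Fintype.card ι : ℝ) / 2) / (Gamma (1 - s) * Gamma ((Fintype.card ι + 2 * s) / 2)) *
        ∑ i, a i ^ (-s) * ∫ t in Ioi (0 : ℝ), coordIntegrand a s i t := by
  have hΓ₁ : 0 < Gamma (1 - s) := Gamma_pos_of_pos (by linarith)
  have hΓ₂ : 0 < Gamma ((Fintype.card ι + 2 * s) / 2) := Gamma_pos_of_pos (by linarith)
  have coeff_nonneg (i : ι) : 0 ≤ π ^ ((Fintype.card ι : ℝ) / 2) / 2 * a i ^ (-s) := by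
    have := ha i
    positivity
  have integrable := integrableOn_coordIntegrand hs_gt hs_lt ha
  refine ⟨integrable, ?_⟩
  have identity := congrArg ENNReal.toReal
    (Gamma_mul_lintegral_toSphere_diagForm_rpow hs_gt hs_lt ha)
  simp only [ENNReal.toReal_sum fun i _ ↦
      ENNReal.mul_ne_top ENNReal.ofReal_ne_top (integrable i).lintegral_lt_top.ne,
    ENNReal.toReal_mul, ENNReal.toReal_ofReal hΓ₁.le, ENNReal.toReal_ofReal (half_pos hΓ₂).le,
    ENNReal.toReal_ofReal (coeff_nonneg _), mul_assoc, ← Finset.mul_sum] at identity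
  simp only [integral_eq_lintegral_of_nonneg_ae (coordIntegrand_nonneg_ae a s _)
    (integrable _).aestronglyMeasurable]
  rw [integral_eq_lintegral_of_nonneg_ae
    (.of_forall fun x ↦ rpow_nonneg (diagForm_pos ha (ne_zero_of_mem_unit_sphere x)).le _)
    (integrable_diagForm_rpow_toSphere ha _).aestronglyMeasurable,
    div_mul_eq_mul_div, eq_div_iff (by positivity)]
  linarith

end Sphere

end EuclideanSpace

theorem stmt14 (k : ℕ) (hk : 1 ≤ k) (s : ℝ) (hs0 : 0 < s) (hs1 : s < 1)
    (ε : Fin k → ℝ) (hε : ∀ j, 0 < ε j) :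
    (∀ i : Fin k, IntegrableOn (fun t : ℝ =>
        t ^ (((k : ℝ) + 2 * s) / 2 - 1) / ((1 + t) * ∏ j, Real.sqrt (ε i ^ 2 + ε j ^ 2 * t)))
        (Set.Ioi 0)) ∧
    (∫ x : Metric.sphere (0 : EuclideanSpace ℝ (Fin k)) 1,
        (∑ j, ε j ^ 2 * ((x : EuclideanSpace ℝ (Fin k)) j) ^ 2) ^ (-(((k : ℝ) + 2 * s) / 2))
        ∂(volume : Measure (EuclideanSpace ℝ (Fin k))).toSphere) =
      Real.pi ^ ((k : ℝ) / 2) / (Real.Gamma (1 - s) * Real.Gamma (((k : ℝ) + 2 * s) / 2)) *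
        ∑ i, ε i ^ (-(2 * s)) * ∫ t in Set.Ioi (0 : ℝ),
          t ^ (((k : ℝ) + 2 * s) / 2 - 1) / ((1 + t) * ∏ j, Real.sqrt (ε i ^ 2 + ε j ^ 2 * t)) := by
  have : Nonempty (Fin k) := ⟨⟨0, hk⟩⟩
  have sq_rpow_neg (i : Fin k) : (ε i ^ 2) ^ (-s) = ε i ^ (-(2 * s)) := by
    rw [← rpow_two, ← rpow_mul (hε i).le, mul_neg]
  have hs_gt : -(Fintype.card (Fin k) : ℝ) < 2 * s := by
    linarith [(Fintype.card (Fin k)).cast_nonneg (α := ℝ)]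
  simpa +unfoldPartialApp only [coordIntegrand, diagForm, Fintype.card_fin, sq_rpow_neg] using
    stmt14_general hs_gt hs1 fun j ↦ pow_pos (hε j) 2
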